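/- Let k ≥ 1 and η = π/3. Set w_i = w(x_i) for i = 1,…,2k. If ζ = (ϑ₁(η,p²)/ϑ₄(η,p²))², then ℍ_{2k}(x₁,…,x_k; x_{k+1},…,x_{2k}) = f(x₁,…,x_{2k}) · H_{2k}(w₁,…,w_{2k}), where f(x₁,…,x_{2k}) = (ϑ₄(η,p²)/(ϑ₁(η)² ϑ₄(0,p²)))^{k(k−1)} · ∏_{i=1}^{2k} (ϑ₁(x_i+η)ϑ₁(x_i−η))^{k−1}, at every point where both sides are defined. -/

import Mathlib

noncomputable section

open Complex
open scoped BigOperators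

/-- Jacobi theta function `ϑ₁(z|τ)` with nome `p = e^{iπτ}` (Whittaker–Watson convention). -/
def th1 (z τ : ℂ) : ℂ :=
  -Complex.I * ∑' n : ℤ, (-1 : ℂ) ^ n *
    Complex.exp ((Real.pi : ℂ) * Complex.I * τ * ((n : ℂ) + 1/2) ^ 2 + (2 * (n : ℂ) + 1) * Complex.I * z)

/-- Jacobi theta function `ϑ₂(z|τ)`. -/
def th2 (z τ : ℂ) : ℂ :=
  ∑' n : ℤ,
    Complex.exp ((Real.pi : ℂ) * Complex.I * τ * ((n : ℂ) + 1/2) ^ 2 + (2 * (n : ℂ) + 1) * Complex.I * z)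

/-- Jacobi theta function `ϑ₃(z|τ)`. -/
def th3 (z τ : ℂ) : ℂ :=
  ∑' n : ℤ, Complex.exp ((Real.pi : ℂ) * Complex.I * τ * (n : ℂ) ^ 2 + 2 * (n : ℂ) * Complex.I * z)

/-- Jacobi theta function `ϑ₄(z|τ)`. -/
def th4 (z τ : ℂ) : ℂ :=
  ∑' n : ℤ, (-1 : ℂ) ^ n *
    Complex.exp ((Real.pi : ℂ) * Complex.I * τ * (n : ℂ) ^ 2 + 2 * (n : ℂ) * Complex.I * z)

/-- The crossing parameter `η = π/3`. -/
def ηc : ℂ := (Real.pi : ℂ) / 3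

/-- The elliptic nome `p = e^{iπτ}`. -/
def pnome (τ : ℂ) : ℂ := Complex.exp ((Real.pi : ℂ) * Complex.I * τ)

/-- `ζ = (ϑ₁(η,p²)/ϑ₄(η,p²))²`. -/
def zet (τ : ℂ) : ℂ := (th1 ηc (2 * τ) / th4 ηc (2 * τ)) ^ 2

/-- The nome `p` is real with `0 < p < 1`. -/
def preal (τ : ℂ) : Prop := (pnome τ).im = 0 ∧ 0 < (pnome τ).re ∧ (pnome τ).re < 1

/-- A tuple given by a list of prescribed entries, padded by zeros. -/
def padded {n : ℕ} (l : List ℂ) : Fin n → ℂ := fun j => l.getD (j : ℕ) 0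

/-- Extension of a tuple by a list of prescribed further entries (padded by zeros). -/
def extL {m n : ℕ} (w : Fin m → ℂ) (l : List ℂ) : Fin n → ℂ :=
  fun j => if h : (j : ℕ) < m then w ⟨j, h⟩ else l.getD ((j : ℕ) - m) 0

/-- First `k` entries of a `2k`-tuple. -/
def firstHalf {k : ℕ} (x : Fin (2 * k) → ℂ) : Fin k → ℂ :=
  fun i => x ⟨(i : ℕ), by have := i.2; omega⟩

/-- Last `k` entries of a `2k`-tuple. -/
def secondHalf {k : ℕ} (x : Fin (2 * k) → ℂ) : Fin k → ℂ :=
  fun i => x ⟨k + (i : ℕ), by have := i.2; omega⟩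

/-- `𝕙(x,y) = ϑ₁(x−y+η)ϑ₁(x−y−η)ϑ₁(x+y+η)ϑ₁(x+y−η)`. -/
def hh (τ x y : ℂ) : ℂ :=
  th1 (x - y + ηc) τ * th1 (x - y - ηc) τ * th1 (x + y + ηc) τ * th1 (x + y - ηc) τ

/-- `𝔻(x₁,…,x_k) = ∏_{i<j} ϑ₁(x_j−x_i)ϑ₁(x_j+x_i)`. -/
def vdTheta (τ : ℂ) {k : ℕ} (y : Fin k → ℂ) : ℂ :=
  ∏ i : Fin k, ∏ j : Fin k, if i < j then th1 (y j - y i) τ * th1 (y j + y i) τ else 1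

/-- The elliptic Tsuchiya determinant `ℍ_{2k}(x₁,…,x_k; x_{k+1},…,x_{2k})`. -/
def tsuchiya (τ : ℂ) (k : ℕ) (x : Fin (2 * k) → ℂ) : ℂ :=
  (∏ i : Fin k, ∏ j : Fin k, hh τ (firstHalf x i) (secondHalf x j))
    / (vdTheta τ (firstHalf x) * vdTheta τ (secondHalf x))
    * Matrix.det (Matrix.of fun i j : Fin k => (hh τ (firstHalf x i) (secondHalf x j))⁻¹)

/-- The expression defining the elliptic Tsuchiya determinant is well defined:
the Vandermonde-type denominators and the entries `𝕙(x_i,x_{j+k})` are nonzero. -/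
def tsuDefined (τ : ℂ) (k : ℕ) (x : Fin (2 * k) → ℂ) : Prop :=
  (∀ i j : Fin k, i ≠ j →
    th1 (firstHalf x j - firstHalf x i) τ ≠ 0 ∧ th1 (firstHalf x j + firstHalf x i) τ ≠ 0) ∧
  (∀ i j : Fin k, i ≠ j →
    th1 (secondHalf x j - secondHalf x i) τ ≠ 0 ∧ th1 (secondHalf x j + secondHalf x i) τ ≠ 0) ∧
  (∀ i j : Fin k, hh τ (firstHalf x i) (secondHalf x j) ≠ 0)

/-- `h(w,w') = 1 − (3+ζ²)ww' + (1−ζ²)ww'(w+w')`. -/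
def hpol (ζ w w' : ℂ) : ℂ := 1 - (3 + ζ ^ 2) * w * w' + (1 - ζ ^ 2) * w * w' * (w + w')

/-- Vandermonde product `Δ(w₁,…,w_k) = ∏_{i<j}(w_j − w_i)`. -/
def vdm {k : ℕ} (y : Fin k → ℂ) : ℂ :=
  ∏ i : Fin k, ∏ j : Fin k, if i < j then y j - y i else 1

/-- The determinant-ratio expression defining the polynomial `H_{2k}`. -/
def Hratio (ζ : ℂ) (k : ℕ) (w : Fin (2 * k) → ℂ) : ℂ :=
  (∏ i : Fin k, ∏ j : Fin k, hpol ζ (firstHalf w i) (secondHalf w j))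
    / (vdm (firstHalf w) * vdm (secondHalf w))
    * Matrix.det (Matrix.of fun i j : Fin k => (hpol ζ (firstHalf w i) (secondHalf w j))⁻¹)

/-- The expression `Hratio` is well defined at `w`. -/
def HratioDefined (ζ : ℂ) (k : ℕ) (w : Fin (2 * k) → ℂ) : Prop :=
  (∀ i j : Fin k, i ≠ j → firstHalf w i ≠ firstHalf w j) ∧
  (∀ i j : Fin k, i ≠ j → secondHalf w i ≠ secondHalf w j) ∧
  (∀ i j : Fin k, hpol ζ (firstHalf w i) (secondHalf w j) ≠ 0)

/-- `H` is the family of Rosengren–Zinn-Justin polynomials `H_{2k}` for parameter `ζ`: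
for each `k`, `H k` is a polynomial function of the `2k` variables agreeing with the
determinant-ratio formula wherever the latter is defined, and `H 0 = 1`. -/
def IsHFamily (ζ : ℂ) (H : (k : ℕ) → (Fin (2 * k) → ℂ) → ℂ) : Prop :=
  (∀ w, H 0 w = 1) ∧
  (∀ k : ℕ, ∃ P : MvPolynomial (Fin (2 * k)) ℂ, ∀ w, H k w = MvPolynomial.eval w P) ∧
  (∀ (k : ℕ) (w : Fin (2 * k) → ℂ), HratioDefined ζ k w → H k w = Hratio ζ k w)

/-- Vertex weight `a(u)`. -/
def av (τ u : ℂ) : ℂ := th4 (2*ηc) (2*τ) * th1 (u + 2*ηc) (2*τ) * th4 u (2*τ)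
/-- Vertex weight `b(u)`. -/
def bv (τ u : ℂ) : ℂ := th4 (2*ηc) (2*τ) * th4 (u + 2*ηc) (2*τ) * th1 u (2*τ)
/-- Vertex weight `c(u)`. -/
def cv (τ u : ℂ) : ℂ := th1 (2*ηc) (2*τ) * th4 (u + 2*ηc) (2*τ) * th4 u (2*τ)
/-- Vertex weight `d(u)`. -/
def dv (τ u : ℂ) : ℂ := th1 (2*ηc) (2*τ) * th1 (u + 2*ηc) (2*τ) * th1 u (2*τ)
/-- `r(u) = a(u) + b(u)`. -/
def rv (τ u : ℂ) : ℂ := av τ u + bv τ u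

/-- Entries of the `R`-matrix of the eight-vertex model, in the basis `{↑↑,↑↓,↓↑,↓↓}`
identified with `Fin 2 × Fin 2` (`↑ = 0`, `↓ = 1`). -/
def Rent (τ u : ℂ) (p q : Fin 2 × Fin 2) : ℂ :=
  if p = q then (if p.1 = p.2 then av τ u else bv τ u)
  else if q = (p.2, p.1) then cv τ u
  else if p.1 = p.2 ∧ q.1 = q.2 then dv τ u
  else 0

/-- Entries of `Ř(u) = 𝒫 R(u)`. -/
def Rcheckent (τ u : ℂ) (p q : Fin 2 × Fin 2) : ℂ := Rent τ u (p.2, p.1) q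

/-- The boundary vector `χ(x) ∈ ℂ²⊗ℂ²`. -/
def chiV (τ lam x : ℂ) : Fin 2 × Fin 2 → ℂ := fun p =>
  if p = ((0 : Fin 2), (1 : Fin 2)) then th1 (x + lam) (2*τ) * th4 (x - lam - 2*ηc) (2*τ)
  else if p = ((1 : Fin 2), (0 : Fin 2)) then th1 (x - lam - 2*ηc) (2*τ) * th4 (x + lam) (2*τ)
  else 0

/-- The boundary vector `χ̄(x) ∈ ℂ²⊗ℂ²`. -/
def chibarV (τ lam x : ℂ) : Fin 2 × Fin 2 → ℂ := fun p =>
  if p = ((0 : Fin 2), (0 : Fin 2)) then th1 (x + lam) (2*τ) * th1 (x - lam - 2*ηc) (2*τ)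
  else if p = ((1 : Fin 2), (1 : Fin 2)) then th4 (x - lam - 2*ηc) (2*τ) * th4 (x + lam) (2*τ)
  else 0

/-- A family `Ψ_n(u₁,…,u_{2n+1}) ∈ (ℂ²)^{⊗(2n+1)}`, represented by its components
with respect to spin configurations `α : Fin (2n+1) → Fin 2` (`↑ = 0`, `↓ = 1`). -/
abbrev PsiFam := (n : ℕ) → (Fin (2 * n + 1) → ℂ) → (Fin (2 * n + 1) → Fin 2) → ℂ

/-- The action of `Ř(u)` on tensor factors `i`, `j` of `(ℂ²)^{⊗L}`. -/
def applyRc (τ u : ℂ) {L : ℕ} (i j : Fin L) (ψ : (Fin L → Fin 2) → ℂ) :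
    (Fin L → Fin 2) → ℂ := fun α =>
  ∑ s : Fin 2, ∑ t : Fin 2,
    Rcheckent τ u (α i, α j) (s, t) * ψ (Function.update (Function.update α i s) j t)

/-- Spin flip. -/
def flipS : Fin 2 → Fin 2 := fun s => if s = 0 then 1 else 0

/-- Components of the singlet `s = ↑↓ − ↓↑`. -/
def singletC : Fin 2 → Fin 2 → ℂ := fun s t =>
  if s = 0 ∧ t = 1 then 1 else if s = 1 ∧ t = 0 then -1 else 0

/-- Delete the entries at positions `i`, `i+1` from a tuple. -/
def delTwo {α : Type*} {n : ℕ} (i : ℕ) (u : Fin (2 * (n + 1) + 1) → α) : Fin (2 * n + 1) → α :=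
  fun j => if _h : (j : ℕ) < i then u ⟨j, by have := j.2; omega⟩
           else u ⟨(j : ℕ) + 2, by have := j.2; omega⟩

/-- The components of `Ψ_n` are entire functions of each `u_i`. -/
def PsiEntire (Ψ : PsiFam) : Prop :=
  ∀ (n : ℕ) (u : Fin (2*n+1) → ℂ) (i : Fin (2*n+1)) (α : Fin (2*n+1) → Fin 2),
    Differentiable ℂ fun z => Ψ n (Function.update u i z) α

/-- (P1): the exchange relations. -/
def PsiP1 (τ : ℂ) (Ψ : PsiFam) : Prop :=
  ∀ (n : ℕ) (u : Fin (2*n+1) → ℂ) (i j : Fin (2*n+1)), (j : ℕ) = (i : ℕ) + 1 →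
    applyRc τ (u j - u i) i j (Ψ n u)
      = fun α => rv τ (u j - u i) * Ψ n (fun l => u (Equiv.swap i j l)) α

/-- (P2): local spin flips. -/
def PsiP2 (τ : ℂ) (Ψ : PsiFam) : Prop :=
  ∀ (n : ℕ) (u : Fin (2*n+1) → ℂ) (i : Fin (2*n+1)) (α : Fin (2*n+1) → Fin 2),
    Ψ n u (Function.update α i (flipS (α i)))
      = (-(pnome τ)) ^ n * Complex.exp (-Complex.I * ∑ j, (u j - u i))
        * Ψ n (Function.update u i (u i + Real.pi * τ)) α

/-- (P3): quasi-periodicity of `Ψ_n` in each `u_i`. -/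
def PsiP3 (τ : ℂ) (Ψ : PsiFam) : Prop :=
  ∀ (n : ℕ) (u : Fin (2*n+1) → ℂ) (i : Fin (2*n+1)),
    (Ψ n (Function.update u i (u i + Real.pi))
      = fun α => (∏ j ∈ Finset.univ.erase i, (if α j = 0 then (1:ℂ) else -1)) * Ψ n u α) ∧
    (Ψ n (Function.update u i (u i + 2 * Real.pi * τ))
      = fun α => (pnome τ ^ (4*n))⁻¹ *
          Complex.exp (-2 * Complex.I * ∑ j, (u i - u j)) * Ψ n u α)

/-- (P4): the wheel condition. -/
def PsiP4 (Ψ : PsiFam) : Prop :=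
  ∀ (n : ℕ) (u : Fin (2*n+1) → ℂ),
    (∃ i j k : Fin (2*n+1), i < j ∧ j < k ∧ u j = u i + 2*ηc ∧ u k = u i + 4*ηc) →
    Ψ n u = 0

/-- (P5): the reduction relations. -/
def PsiP5 (τ : ℂ) (Ψ : PsiFam) : Prop :=
  ∀ (n : ℕ) (u : Fin (2*(n+1)+1) → ℂ) (i : ℕ) (hi : i + 1 < 2*(n+1)+1),
    u ⟨i+1, hi⟩ = u ⟨i, by omega⟩ + 2*ηc →
    Ψ (n+1) u = fun α =>
      (∏ j ∈ (Finset.univ.erase (⟨i, by omega⟩ : Fin (2*(n+1)+1))).erase ⟨i+1, hi⟩,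
          th1 (u ⟨i, by omega⟩ - u j - 2*ηc) τ)
        * singletC (α ⟨i, by omega⟩) (α ⟨i+1, hi⟩)
        * Ψ n (delTwo i u) (delTwo i α)

/-- (P6): `Ψ₀ = ↑ + ↓`. -/
def PsiP6 (Ψ : PsiFam) : Prop := ∀ u α, Ψ 0 u α = 1

/-- The inhomogeneity parameters `(x₁,−x₁,…,x_n,−x_n,0)`. -/
def interleave {n : ℕ} (x : Fin n → ℂ) : Fin (2*n+1) → ℂ := fun j =>
  if h : (j : ℕ) < 2*n then
    (if (j : ℕ) % 2 = 0 then x ⟨(j:ℕ)/2, by omega⟩ else -x ⟨(j:ℕ)/2, by omega⟩)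
  else 0

/-- Components of `χ(x)`. -/
def chiC (τ lam x : ℂ) (s t : Fin 2) : ℂ :=
  if s = 0 ∧ t = 1 then th1 (x + lam) (2*τ) * th4 (x - lam - 2*ηc) (2*τ)
  else if s = 1 ∧ t = 0 then th1 (x - lam - 2*ηc) (2*τ) * th4 (x + lam) (2*τ)
  else 0

/-- Components of `χ̄(x)`. -/
def chibarC (τ lam x : ℂ) (s t : Fin 2) : ℂ :=
  if s = 0 ∧ t = 0 then th1 (x + lam) (2*τ) * th1 (x - lam - 2*ηc) (2*τ)
  else if s = 1 ∧ t = 1 then th4 (x - lam - 2*ηc) (2*τ) * th4 (x + lam) (2*τ)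
  else 0

/-- The scalar product `Z_n(x₁,…,x_n) = ⟨ξ_n(x₁,…,x_n), Ψ_n(x₁,−x₁,…,x_n,−x_n,0)⟩`. -/
def Zfun (τ lam : ℂ) (Ψ : PsiFam) (n : ℕ) (x : Fin n → ℂ) : ℂ :=
  ∑ α : Fin (2*n+1) → Fin 2,
    (∏ m : Fin n, chiC τ lam (x m)
        (α ⟨2*(m:ℕ), by have := m.2; omega⟩) (α ⟨2*(m:ℕ)+1, by have := m.2; omega⟩))
      * (if α ⟨2*n, by omega⟩ = 0 then (1:ℂ) else 0)
      * Ψ n (interleave x) α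

/-- The scalar product `Z̄_n^±(x₁,…,x_n)`, with `ε = ±1`. -/
def Zbarfun (τ lam ε : ℂ) (Ψ : PsiFam) (n : ℕ) (x : Fin n → ℂ) : ℂ :=
  ∑ α : Fin (2*n+1) → Fin 2,
    (∏ m : Fin n, chibarC τ lam (x m)
        (α ⟨2*(m:ℕ), by have := m.2; omega⟩) (α ⟨2*(m:ℕ)+1, by have := m.2; omega⟩))
      * (if α ⟨2*n, by omega⟩ = 0 then (1:ℂ) else ε)
      * Ψ n (interleave x) α

/-- The normalisation constant `𝒩_n`. -/
def Ncoef (τ : ℂ) (n : ℕ) : ℂ :=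
  (-1 : ℂ) ^ ((n+1)/2) * (th1 ηc τ ^ (n^2))⁻¹ * (th4 0 (2*τ) / th4 ηc (2*τ)) ^ (n*(n+1)/2)

/-- The vector `ψ_n = 𝒩_n Ψ_n(0,…,0)`. -/
def psiH (τ : ℂ) (Ψ : PsiFam) (n : ℕ) (α : Fin (2*n+1) → Fin 2) : ℂ :=
  Ncoef τ n * Ψ n (fun _ => 0) α

/-- The scalar product `S_n(μ) = ((⟨↑↓| + μ⟨↓↑|)^{⊗n} ⊗ ⟨↑|) ψ_n`. -/
def Sfun (τ : ℂ) (Ψ : PsiFam) (n : ℕ) (μ : ℂ) : ℂ :=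
  ∑ α : Fin (2*n+1) → Fin 2,
    (∏ m : Fin n,
      (if α ⟨2*(m:ℕ), by have := m.2; omega⟩ = 0 ∧ α ⟨2*(m:ℕ)+1, by have := m.2; omega⟩ = 1
        then (1:ℂ)
       else if α ⟨2*(m:ℕ), by have := m.2; omega⟩ = 1 ∧ α ⟨2*(m:ℕ)+1, by have := m.2; omega⟩ = 0
        then μ
       else 0))
      * (if α ⟨2*n, by omega⟩ = 0 then (1:ℂ) else 0) * psiH τ Ψ n α

/-- The scalar product `S̄_n^±(ν) = ((⟨↑↑| + ν⟨↓↓|)^{⊗n} ⊗ (⟨↑| ± ⟨↓|)) ψ_n`, with `ε = ±1`. -/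
def Sbarfun (τ ε : ℂ) (Ψ : PsiFam) (n : ℕ) (ν : ℂ) : ℂ :=
  ∑ α : Fin (2*n+1) → Fin 2,
    (∏ m : Fin n,
      (if α ⟨2*(m:ℕ), by have := m.2; omega⟩ = 0 ∧ α ⟨2*(m:ℕ)+1, by have := m.2; omega⟩ = 0
        then (1:ℂ)
       else if α ⟨2*(m:ℕ), by have := m.2; omega⟩ = 1 ∧ α ⟨2*(m:ℕ)+1, by have := m.2; omega⟩ = 1
        then ν
       else 0))
      * (if α ⟨2*n, by omega⟩ = 0 then (1:ℂ) else ε) * psiH τ Ψ n α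

/-- The alternating spin configuration `↑↓↑↓⋯↑`. -/
def altConf {L : ℕ} : Fin L → Fin 2 := fun j => if (j : ℕ) % 2 = 0 then 0 else 1

/-- The fully polarised spin configuration `↓⋯↓`. -/
def downConf {L : ℕ} : Fin L → Fin 2 := fun _ => 1

/-- The spin configuration `↑⋯↑↓` with a single `↓` at the last site. -/
def lastDownConf {n : ℕ} : Fin (2*n+1) → Fin 2 := fun j => if (j : ℕ) = 2*n then 1 else 0

/-- `J₂ = −1/2`. -/
def J2c : ℂ := -(1/2)
/-- `J₃ = 1/(1+ζ)`. -/
def J3c (ζ : ℂ) : ℂ := 1/(1+ζ)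
/-- `J₄ = 1/(1−ζ)`. -/
def J4c (ζ : ℂ) : ℂ := 1/(1-ζ)
/-- `μ̄ = (μ−1)²/((ζ²−1)μ)`. -/
def mubar (ζ μ : ℂ) : ℂ := (μ - 1)^2 / ((ζ^2 - 1)*μ)
/-- `ν̄ = (ν−ζ)(νζ−1)/((ζ²−1)ν)`. -/
def nubar (ζ ν : ℂ) : ℂ := (ν - ζ)*(ν*ζ - 1) / ((ζ^2 - 1)*ν)

/-- The elliptic function `w(x)`. -/
def wfun (τ x : ℂ) : ℂ :=
  th4 ηc (2*τ) / th4 0 (2*τ) * th1 x τ ^ 2 / (th1 (x - ηc) τ * th1 (x + ηc) τ)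

/-- `β₂ = η + π/2`. -/
def β2c : ℂ := ηc + (Real.pi : ℂ)/2
/-- `β₃ = η + π/2 + πτ/2`. -/
def β3c (τ : ℂ) : ℂ := ηc + (Real.pi : ℂ)/2 + (Real.pi : ℂ)*τ/2
/-- `β₄ = η + πτ/2`. -/
def β4c (τ : ℂ) : ℂ := ηc + (Real.pi : ℂ)*τ/2

/-- `f` is an (even) theta function of degree `m`, nome `p = e^{iπτ}` and norm `0`
with respect to each of its variables. -/
def ThetaLike (τ : ℂ) (m : ℕ) {n : ℕ} (X : (Fin n → ℂ) → ℂ) : Prop :=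
  ∀ (x : Fin n → ℂ) (i : Fin n),
    Differentiable ℂ (fun z => X (Function.update x i z)) ∧
    (∀ z, X (Function.update x i (z + Real.pi)) = X (Function.update x i z)) ∧
    (∀ z, X (Function.update x i (z + Real.pi * τ))
        = ((-(pnome τ)) ^ m)⁻¹ * Complex.exp (-2 * Complex.I * ((m : ℂ) * z))
            * X (Function.update x i z)) ∧
    (∀ z, X (Function.update x i (-z)) = X (Function.update x i z))



/-!
The theta functions with characteristic satisfy a product formula that trades the nome `p` for
`p²`, obtained by splitting pairs of integers by the parity of their difference. It gives the
three-term relation for `ϑ₁`, the duplication formula for `ϑ₄` and a Landen transformation.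

At `η = π/3` one has `y + 2η = (y - η) + π`, so multiplying two instances of the three-term relation
expands `𝕙(x,y)` in `ϑ₁(x)² / (ϑ₁(x+η)ϑ₁(x-η))`. Since `𝕙` is symmetric, the middle coefficient is
forced: `(ϑ₁(y), ϑ₁(y+η), ϑ₁(y-η))` lies on a Hesse cubic. The Landen transformation identifies its
parameter at `y = π/2`, and duplication at `η` relates it to `ζ`. Hence `𝕙(x,y)` is `h(w(x),w(y))`
up to a factor `u(x)u(y)`. The three-term relation also shows that `w(x) - w(y)` is
`ϑ₁(x-y)ϑ₁(x+y)` up to such a factor, so the two determinant ratios differ by an explicit product.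
-/

section Characteristic

/-- The theta function with characteristic `a`, so that `ϑ₂` and `ϑ₃` have characteristics `1/2`
and `0`. The second characteristic is left out, being a translation of `z`. -/
def thetaChar (a z τ : ℂ) : ℂ :=
  ∑' n : ℤ, exp (Real.pi * I * τ * (n + a) ^ 2 + 2 * (n + a) * I * z)

theorem thetaChar_add_one (a z τ : ℂ) : thetaChar (a + 1) z τ = thetaChar a z τ := by
  unfold thetaChar
  rw [← (Equiv.addRight (1 : ℤ)).tsum_eq fun n : ℤ =>
    exp (Real.pi * I * τ * (n + a) ^ 2 + 2 * (n + a) * I * z)]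
  refine tsum_congr fun n => congrArg exp ?_
  simp only [Equiv.coe_addRight]
  push_cast
  ring

theorem thetaChar_neg_neg (a z τ : ℂ) : thetaChar (-a) (-z) τ = thetaChar a z τ := by
  unfold thetaChar
  rw [← (Equiv.neg ℤ).tsum_eq]
  refine tsum_congr fun n => congrArg exp ?_
  simp only [Equiv.neg_apply]
  push_cast
  ring

theorem thetaChar_add_pi (a z τ : ℂ) :
    thetaChar a (z + Real.pi) τ = exp (2 * Real.pi * I * a) * thetaChar a z τ := by
  unfold thetaChar
  rw [← tsum_mul_left]
  refine tsum_congr fun n => ?_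
  rw [← exp_add]
  refine (congrArg exp ?_).trans (exp_periodic.int_mul n _)
  ring

theorem summable_thetaChar_term (a z : ℂ) {τ : ℂ} (hτ : 0 < τ.im) :
    Summable fun n : ℤ => exp (Real.pi * I * τ * (n + a) ^ 2 + 2 * (n + a) * I * z) := by
  refine (((summable_jacobiTheta₂_term_iff (z / Real.pi + a * τ) τ).2 hτ).mul_left
    (exp (Real.pi * I * τ * a ^ 2 + 2 * a * I * z))).congr fun n => ?_
  have hπ : (Real.pi : ℂ) ≠ 0 := ofReal_ne_zero.2 Real.pi_ne_zero
  rw [jacobiTheta₂_term, ← exp_add]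
  congr 1
  field_simp
  ring

/-- Pairs of integers `(n, m)` split by the parity of `n - m`: they are of the form
`(r + s, r - s)` or `(r + s + 1, r - s)`. -/
def parityEquiv : (ℤ × ℤ) ⊕ (ℤ × ℤ) ≃ ℤ × ℤ where
  toFun := Sum.elim (fun p => (p.1 + p.2, p.1 - p.2)) (fun p => (p.1 + p.2 + 1, p.1 - p.2))
  invFun p := if Even (p.1 - p.2) then .inl (p.2 + (p.1 - p.2) / 2, (p.1 - p.2) / 2)
    else .inr (p.2 + (p.1 - p.2) / 2, (p.1 - p.2) / 2)
  left_inv := by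
    rintro (⟨r, s⟩ | ⟨r, s⟩)
    · have h : Even (r + s - (r - s)) := by rw [Int.even_iff]; omega
      simp only [Sum.elim_inl, h, if_true, Sum.inl.injEq, Prod.mk.injEq]
      omega
    · have h : ¬ Even (r + s + 1 - (r - s)) := by rw [Int.even_iff]; omega
      simp only [Sum.elim_inr, h, if_false, Sum.inr.injEq, Prod.mk.injEq]
      omega
  right_inv := by
    rintro ⟨n, m⟩
    by_cases h : Even (n - m)
    · simp only [h, if_true, Sum.elim_inl, Prod.mk.injEq]
      rw [Int.even_iff] at h
      omega
    · simp only [h, if_false, Sum.elim_inr, Prod.mk.injEq]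
      rw [Int.even_iff] at h
      omega

theorem thetaChar_add_mul_thetaChar_sub (a b x y : ℂ) {τ : ℂ} (hτ : 0 < τ.im) :
    thetaChar a (x + y) τ * thetaChar b (x - y) τ
      = thetaChar ((a + b) / 2) (2 * x) (2 * τ) * thetaChar ((a - b) / 2) (2 * y) (2 * τ)
        + thetaChar ((a + b + 1) / 2) (2 * x) (2 * τ)
          * thetaChar ((a - b + 1) / 2) (2 * y) (2 * τ) := by
  have h2τ : 0 < (2 * τ).im := by simpa using hτ
  have hs := (parityEquiv.summable_iff).2 (summable_mul_of_summable_norm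
    (summable_thetaChar_term a (x + y) hτ).norm (summable_thetaChar_term b (x - y) hτ).norm)
  unfold thetaChar
  rw [tsum_mul_tsum_of_summable_norm (summable_thetaChar_term _ _ hτ).norm
      (summable_thetaChar_term _ _ hτ).norm,
    tsum_mul_tsum_of_summable_norm (summable_thetaChar_term _ _ h2τ).norm
      (summable_thetaChar_term _ _ h2τ).norm,
    tsum_mul_tsum_of_summable_norm (summable_thetaChar_term _ _ h2τ).norm
      (summable_thetaChar_term _ _ h2τ).norm,
    ← parityEquiv.tsum_eq]
  refine (Summable.tsum_sum (hs.comp_injective Sum.inl_injective)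
    (hs.comp_injective Sum.inr_injective)).trans (congrArg₂ (· + ·) ?_ ?_)
  · refine tsum_congr fun p => ?_
    simp only [parityEquiv, Function.comp_apply, Equiv.coe_fn_mk, Sum.elim_inl, ← exp_add]
    congr 1
    push_cast
    ring
  · refine tsum_congr fun p => ?_
    simp only [parityEquiv, Function.comp_apply, Equiv.coe_fn_mk, Sum.elim_inr, ← exp_add]
    congr 1
    push_cast
    ring

theorem th2_eq_thetaChar (z τ : ℂ) : th2 z τ = thetaChar (1 / 2) z τ := by
  unfold th2 thetaChar
  refine tsum_congr fun n => congrArg exp ?_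
  ring

theorem th3_eq_thetaChar (z τ : ℂ) : th3 z τ = thetaChar 0 z τ := by
  simp only [th3, thetaChar, add_zero]

end Characteristic

section JacobiTheta

theorem th2_neg (z τ : ℂ) : th2 (-z) τ = th2 z τ := by
  rw [th2_eq_thetaChar, th2_eq_thetaChar, ← thetaChar_neg_neg, ← thetaChar_add_one, neg_neg]
  norm_num

theorem th3_neg (z τ : ℂ) : th3 (-z) τ = th3 z τ := by
  rw [th3_eq_thetaChar, th3_eq_thetaChar, ← thetaChar_neg_neg, neg_neg, neg_zero]

theorem th2_add_pi (z τ : ℂ) : th2 (z + Real.pi) τ = -th2 z τ := by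
  rw [th2_eq_thetaChar, th2_eq_thetaChar, thetaChar_add_pi,
    show 2 * Real.pi * I * (1 / 2) = Real.pi * I by ring, exp_pi_mul_I, neg_one_mul]

theorem th3_add_pi (z τ : ℂ) : th3 (z + Real.pi) τ = th3 z τ := by
  rw [th3_eq_thetaChar, th3_eq_thetaChar, thetaChar_add_pi, mul_zero, exp_zero, one_mul]

theorem th1_eq_th2 (z τ : ℂ) : th1 z τ = th2 (z - Real.pi / 2) τ := by
  unfold th1 th2
  rw [← tsum_mul_left]
  refine tsum_congr fun n => ?_
  have hsign : (-1 : ℂ) ^ n = exp (n * (-(Real.pi * I))) := by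
    rw [exp_int_mul, exp_neg, exp_pi_mul_I, inv_neg, inv_one]
  rw [hsign, ← exp_neg_pi_div_two_mul_I, ← exp_add, ← exp_add]
  congr 1
  ring

theorem th4_eq_th3 (z τ : ℂ) : th4 z τ = th3 (z + Real.pi / 2) τ := by
  unfold th4 th3
  refine tsum_congr fun n => ?_
  rw [← exp_pi_mul_I, ← exp_int_mul, ← exp_add]
  congr 1
  ring

theorem th2_add_half_pi (z τ : ℂ) : th2 (z + Real.pi / 2) τ = -th1 z τ := by
  rw [th1_eq_th2, ← th2_add_pi, sub_add_eq_add_sub, add_sub_assoc, sub_half]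

theorem th1_neg (z τ : ℂ) : th1 (-z) τ = -th1 z τ := by
  rw [← th2_add_half_pi, th1_eq_th2, ← th2_neg, neg_sub', neg_neg, sub_neg_eq_add]

theorem th1_zero (τ : ℂ) : th1 0 τ = 0 :=
  self_eq_neg.1 (by rw [← th1_neg, neg_zero])

theorem th1_add_pi (z τ : ℂ) : th1 (z + Real.pi) τ = -th1 z τ := by
  rw [th1_eq_th2, th1_eq_th2, add_sub_right_comm, th2_add_pi]

theorem th1_pi_sub (z τ : ℂ) : th1 (Real.pi - z) τ = th1 z τ := by
  rw [sub_eq_neg_add, th1_add_pi, th1_neg, neg_neg]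

theorem th4_neg (z τ : ℂ) : th4 (-z) τ = th4 z τ := by
  rw [th4_eq_th3, th4_eq_th3, ← th3_neg, ← th3_add_pi]
  congr 1
  ring

theorem th4_add_pi (z τ : ℂ) : th4 (z + Real.pi) τ = th4 z τ := by
  rw [th4_eq_th3, th4_eq_th3, add_right_comm, th3_add_pi]

theorem th4_pi_sub (z τ : ℂ) : th4 (Real.pi - z) τ = th4 z τ := by
  rw [sub_eq_neg_add, th4_add_pi, th4_neg]

theorem th2_add_mul_th2_sub (x y : ℂ) {τ : ℂ} (hτ : 0 < τ.im) :
    th2 (x + y) τ * th2 (x - y) τ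
      = th2 (2 * x) (2 * τ) * th3 (2 * y) (2 * τ)
        + th3 (2 * x) (2 * τ) * th2 (2 * y) (2 * τ) := by
  have h := thetaChar_add_mul_thetaChar_sub (1 / 2) (1 / 2) x y hτ
  rw [add_halves, sub_self, zero_div, zero_add, show ((1 + 1) / 2 : ℂ) = 0 + 1 by norm_num,
    thetaChar_add_one] at h
  simpa only [th2_eq_thetaChar, th3_eq_thetaChar] using h

theorem th3_add_mul_th3_sub (x y : ℂ) {τ : ℂ} (hτ : 0 < τ.im) :
    th3 (x + y) τ * th3 (x - y) τ
      = th3 (2 * x) (2 * τ) * th3 (2 * y) (2 * τ)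
        + th2 (2 * x) (2 * τ) * th2 (2 * y) (2 * τ) := by
  have h := thetaChar_add_mul_thetaChar_sub 0 0 x y hτ
  simpa only [add_zero, sub_zero, zero_div, zero_add, ← th2_eq_thetaChar,
    ← th3_eq_thetaChar] using h

theorem th1_add_mul_th1_sub (x y : ℂ) {τ : ℂ} (hτ : 0 < τ.im) :
    th1 (x + y) τ * th1 (x - y) τ
      = th3 (2 * x) (2 * τ) * th2 (2 * y) (2 * τ)
        - th2 (2 * x) (2 * τ) * th3 (2 * y) (2 * τ) := by
  have h := th2_add_mul_th2_sub (x + Real.pi / 2) y hτ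
  rw [add_right_comm, th2_add_half_pi, add_sub_right_comm, th2_add_half_pi, mul_add,
    mul_div_cancel₀ _ two_ne_zero, th2_add_pi, th3_add_pi] at h
  linear_combination h

theorem th4_add_mul_th4_sub (x y : ℂ) {τ : ℂ} (hτ : 0 < τ.im) :
    th4 (x + y) τ * th4 (x - y) τ
      = th3 (2 * x) (2 * τ) * th3 (2 * y) (2 * τ)
        - th2 (2 * x) (2 * τ) * th2 (2 * y) (2 * τ) := by
  have h := th3_add_mul_th3_sub (x + Real.pi / 2) y hτ
  rw [add_right_comm, ← th4_eq_th3, add_sub_right_comm, ← th4_eq_th3, mul_add,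
    mul_div_cancel₀ _ two_ne_zero, th2_add_pi, th3_add_pi] at h
  linear_combination h

theorem th1_sq (z : ℂ) {τ : ℂ} (hτ : 0 < τ.im) :
    th1 z τ ^ 2 = th3 (2 * z) (2 * τ) * th2 0 (2 * τ) - th2 (2 * z) (2 * τ) * th3 0 (2 * τ) := by
  simpa only [add_zero, sub_zero, mul_zero, ← sq] using th1_add_mul_th1_sub z 0 hτ

theorem th4_sq (z : ℂ) {τ : ℂ} (hτ : 0 < τ.im) :
    th4 z τ ^ 2 = th3 (2 * z) (2 * τ) * th3 0 (2 * τ) - th2 (2 * z) (2 * τ) * th2 0 (2 * τ) := by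
  simpa only [add_zero, sub_zero, mul_zero, ← sq] using th4_add_mul_th4_sub z 0 hτ

theorem th1_three_term (x y c : ℂ) {τ : ℂ} (hτ : 0 < τ.im) :
    th1 c τ ^ 2 * (th1 (x + y) τ * th1 (x - y) τ)
      = th1 y τ ^ 2 * (th1 (x + c) τ * th1 (x - c) τ)
        - th1 x τ ^ 2 * (th1 (y + c) τ * th1 (y - c) τ) := by
  rw [th1_sq c hτ, th1_sq y hτ, th1_sq x hτ, th1_add_mul_th1_sub x y hτ,
    th1_add_mul_th1_sub x c hτ, th1_add_mul_th1_sub y c hτ]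
  ring

theorem th4_zero_sq_mul_th4_add_mul_th4_sub (x y : ℂ) {τ : ℂ} (hτ : 0 < τ.im) :
    th4 0 τ ^ 2 * (th4 (x + y) τ * th4 (x - y) τ)
      = th4 x τ ^ 2 * th4 y τ ^ 2 - th1 x τ ^ 2 * th1 y τ ^ 2 := by
  rw [th4_sq 0 hτ, th4_sq x hτ, th4_sq y hτ, th1_sq x hτ, th1_sq y hτ,
    th4_add_mul_th4_sub x y hτ, mul_zero]
  ring

theorem th4_zero_pow_three_mul_th4_two_mul (z : ℂ) {τ : ℂ} (hτ : 0 < τ.im) :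
    th4 0 τ ^ 3 * th4 (2 * z) τ = th4 z τ ^ 4 - th1 z τ ^ 4 := by
  have h := th4_zero_sq_mul_th4_add_mul_th4_sub z z hτ
  rw [sub_self, ← two_mul] at h
  linear_combination h

theorem th1_add_half_pi_mul_th1_sub (x y : ℂ) {τ : ℂ} (hτ : 0 < τ.im) :
    th1 (x + y + Real.pi / 2) τ * th1 (x - y) τ
      = th1 (2 * x) (2 * τ) * th4 (2 * y) (2 * τ)
        - th4 (2 * x) (2 * τ) * th1 (2 * y) (2 * τ) := by
  have h := th1_add_mul_th1_sub (x + Real.pi / 4) (y + Real.pi / 4) hτ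
  have hdouble (z : ℂ) : 2 * (z + Real.pi / 4) = 2 * z + Real.pi / 2 := by ring
  rw [hdouble, hdouble, ← th4_eq_th3, ← th4_eq_th3, th2_add_half_pi, th2_add_half_pi,
    add_sub_add_right_eq_sub, add_add_add_comm,
    show (Real.pi / 4 + Real.pi / 4 : ℂ) = Real.pi / 2 by ring] at h
  linear_combination h

end JacobiTheta

section CrossingParameter

/-- The product `ϑ₁(x+η)ϑ₁(x-η)`, in which both the denominator of `w(x)` and the prefactor `f`
are written. -/
def etaProd (τ x : ℂ) : ℂ := th1 (x + ηc) τ * th1 (x - ηc) τ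

/-- The normalisation constant `ϑ₄(η,p²)/ϑ₄(0,p²)` of `w`. -/
def wScale (τ : ℂ) : ℂ := th4 ηc (2 * τ) / th4 0 (2 * τ)

theorem wfun_eq (τ x : ℂ) : wfun τ x = wScale τ * th1 x τ ^ 2 / etaProd τ x := by
  rw [wfun, wScale, etaProd, mul_comm (th1 (x - ηc) τ)]

theorem th1_add_eta_add_eta (y τ : ℂ) : th1 (y + ηc + ηc) τ = -th1 (y - ηc) τ := by
  rw [← th1_add_pi, ηc]
  congr 1
  ring

theorem th1_sub_eta_sub_eta (y τ : ℂ) : th1 (y - ηc - ηc) τ = -th1 (y + ηc) τ := by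
  rw [← neg_eq_iff_eq_neg, ← th1_add_pi, ηc]
  congr 1
  ring

theorem th1_two_mul_eta (τ : ℂ) : th1 (2 * ηc) τ = th1 ηc τ := by
  rw [← th1_pi_sub, ηc]
  congr 1
  ring

theorem th4_two_mul_eta (τ : ℂ) : th4 (2 * ηc) τ = th4 ηc τ := by
  rw [← th4_pi_sub, ηc]
  congr 1
  ring

theorem th1_half_pi_sub_eta (τ : ℂ) : th1 (Real.pi / 2 - ηc) τ = th1 (Real.pi / 6) τ := by
  rw [ηc]
  congr 1
  ring

theorem th1_half_pi_add_eta (τ : ℂ) : th1 (Real.pi / 2 + ηc) τ = th1 (Real.pi / 6) τ := by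
  rw [← th1_pi_sub, ηc]
  congr 1
  ring

theorem hh_comm (τ x y : ℂ) : hh τ x y = hh τ y x := by
  rw [hh, hh, show x - y + ηc = -(y - x - ηc) by ring, show x - y - ηc = -(y - x + ηc) by ring,
    th1_neg, th1_neg, add_comm x y]
  ring

theorem th1_eta_pow_four_mul_hh (x y : ℂ) {τ : ℂ} (hτ : 0 < τ.im) :
    th1 ηc τ ^ 4 * hh τ x y
      = etaProd τ x ^ 2 * etaProd τ y ^ 2
        + th1 x τ ^ 2 * etaProd τ x * (th1 y τ * (th1 (y + ηc) τ ^ 3 + th1 (y - ηc) τ ^ 3))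
        + th1 x τ ^ 4 * (th1 y τ ^ 2 * etaProd τ y) := by
  have hp := th1_three_term x (y + ηc) ηc hτ
  have hm := th1_three_term x (y - ηc) ηc hτ
  rw [th1_add_eta_add_eta, add_sub_cancel_right] at hp
  rw [th1_sub_eta_sub_eta, sub_add_cancel] at hm
  rw [hh, sub_add, sub_sub, add_assoc, add_sub_assoc, etaProd, etaProd]
  linear_combination congrArg₂ (· * ·) hp hm

theorem th1_hesse (x y : ℂ) {τ : ℂ} (hτ : 0 < τ.im) :
    (th1 y τ * (th1 (y + ηc) τ ^ 3 + th1 (y - ηc) τ ^ 3) - th1 y τ ^ 4)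
        * (th1 x τ ^ 2 * etaProd τ x)
      = (th1 x τ * (th1 (x + ηc) τ ^ 3 + th1 (x - ηc) τ ^ 3) - th1 x τ ^ 4)
        * (th1 y τ ^ 2 * etaProd τ y) := by
  have hxy := th1_eta_pow_four_mul_hh x y hτ
  have hyx := th1_eta_pow_four_mul_hh y x hτ
  rw [hh_comm] at hxy
  linear_combination hyx - hxy

theorem th1_pi_div_six_mul_th1_eta {τ : ℂ} (hτ : 0 < τ.im) :
    th1 (Real.pi / 6) τ * th1 ηc τ = th1 ηc (2 * τ) * th4 0 (2 * τ) := by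
  have h := th1_add_half_pi_mul_th1_sub ηc 0 hτ
  rwa [add_zero, sub_zero, mul_zero, th1_zero, mul_zero, sub_zero, th1_two_mul_eta, add_comm ηc,
    th1_half_pi_add_eta] at h

theorem th1_half_pi_mul_th1_eta {τ : ℂ} (hτ : 0 < τ.im) :
    th1 (Real.pi / 2) τ * th1 ηc τ = 2 * (th1 ηc (2 * τ) * th4 ηc (2 * τ)) := by
  have h := th1_add_half_pi_mul_th1_sub ηc (-ηc) hτ
  rw [add_neg_cancel, zero_add, sub_neg_eq_add, ← two_mul, mul_neg, th1_neg, th4_neg,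
    th1_two_mul_eta, th1_two_mul_eta, th4_two_mul_eta] at h
  linear_combination h

theorem th1_half_pi_eq {τ : ℂ} (hτ : 0 < τ.im) (hη : th1 ηc τ ≠ 0) (hA : wScale τ ≠ 0) :
    th1 (Real.pi / 2) τ = 2 * wScale τ * th1 (Real.pi / 6) τ := by
  have h0 : th4 0 (2 * τ) ≠ 0 := (div_ne_zero_iff.1 hA).2
  have h6 := th1_pi_div_six_mul_th1_eta hτ
  have h2 := th1_half_pi_mul_th1_eta hτ
  refine mul_right_cancel₀ hη ?_
  rw [h2, mul_assoc, h6, wScale]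
  field_simp

theorem th1_pi_div_six_ne_zero {τ : ℂ} (hτ : 0 < τ.im) (hη : th1 ηc τ ≠ 0) :
    th1 (Real.pi / 6) τ ≠ 0 := by
  have h := th1_three_term (Real.pi / 2) (Real.pi / 6) ηc hτ
  have hadd : (Real.pi / 2 + Real.pi / 6 : ℂ) = 2 * ηc := by rw [ηc]; ring
  have hsub : (Real.pi / 2 - Real.pi / 6 : ℂ) = ηc := by rw [ηc]; ring
  have hadd' : (Real.pi / 6 + ηc : ℂ) = Real.pi / 2 := by rw [ηc]; ring
  have hsub' : (Real.pi / 6 - ηc : ℂ) = -(Real.pi / 6) := by rw [ηc]; ring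
  rw [hadd, hsub, hadd', hsub', th1_neg, th1_two_mul_eta] at h
  intro h6
  refine pow_ne_zero 4 hη ?_
  rw [h6] at h
  linear_combination h

theorem th1_hesse_parameter {τ : ℂ} (hτ : 0 < τ.im) (hη : th1 ηc τ ≠ 0) (hA : wScale τ ≠ 0)
    (y : ℂ) :
    th1 y τ * (th1 (y + ηc) τ ^ 3 + th1 (y - ηc) τ ^ 3)
      = th1 y τ ^ 4 + ((wScale τ)⁻¹ - 4 * wScale τ ^ 2) * (th1 y τ ^ 2 * etaProd τ y) := by
  have h6 := th1_pi_div_six_ne_zero hτ hη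
  have h := th1_hesse (Real.pi / 2) y hτ
  rw [etaProd, th1_half_pi_add_eta, th1_half_pi_sub_eta, th1_half_pi_eq hτ hη hA] at h
  field_simp at h ⊢
  linear_combination h / 2

theorem zet_sq {τ : ℂ} (hτ : 0 < τ.im) (hA : wScale τ ≠ 0) :
    zet τ ^ 2 = 1 - (wScale τ ^ 3)⁻¹ := by
  have h4 : th4 ηc (2 * τ) ≠ 0 := (div_ne_zero_iff.1 hA).1
  have h2τ : 0 < (2 * τ).im := by simpa using hτ
  have h := th4_zero_pow_three_mul_th4_two_mul ηc h2τ
  rw [th4_two_mul_eta] at h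
  rw [zet, wScale, ← inv_pow, inv_div]
  field_simp
  linear_combination h

theorem hh_eq_hpol {τ : ℂ} (hτ : 0 < τ.im) (hη : th1 ηc τ ≠ 0) (hA : wScale τ ≠ 0)
    {x y : ℂ} (hx : etaProd τ x ≠ 0) (hy : etaProd τ y ≠ 0) :
    hh τ x y = (th1 ηc τ ^ 4)⁻¹ * (etaProd τ x ^ 2 * etaProd τ y ^ 2)
      * hpol (zet τ) (wfun τ x) (wfun τ y) := by
  have h := th1_eta_pow_four_mul_hh x y hτ
  rw [th1_hesse_parameter hτ hη hA] at h
  rw [mul_assoc, eq_inv_mul_iff_mul_eq₀ (pow_ne_zero 4 hη), h, hpol, zet_sq hτ hA, wfun_eq,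
    wfun_eq]
  field_simp
  ring

theorem wfun_sub_wfun {τ : ℂ} (hτ : 0 < τ.im) {x y : ℂ} (hx : etaProd τ x ≠ 0)
    (hy : etaProd τ y ≠ 0) :
    (wfun τ x - wfun τ y) * (etaProd τ y * etaProd τ x)
      = -(wScale τ * th1 ηc τ ^ 2) * (th1 (x - y) τ * th1 (x + y) τ) := by
  have h := th1_three_term x y ηc hτ
  rw [← etaProd, ← etaProd] at h
  rw [wfun_eq, wfun_eq]
  field_simp
  linear_combination wScale τ * h

theorem th1_eta_ne_zero_and_wScale_ne_zero_of_wfun_ne {τ : ℂ} (hτ : 0 < τ.im) {x y : ℂ}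
    (hx : etaProd τ x ≠ 0) (hy : etaProd τ y ≠ 0) (hxy : wfun τ x ≠ wfun τ y) :
    th1 ηc τ ≠ 0 ∧ wScale τ ≠ 0 := by
  have h : -(wScale τ * th1 ηc τ ^ 2) * (th1 (x - y) τ * th1 (x + y) τ) ≠ 0 := by
    rw [← wfun_sub_wfun hτ hx hy]
    exact mul_ne_zero (sub_ne_zero.2 hxy) (mul_ne_zero hy hx)
  have hC := neg_ne_zero.1 (left_ne_zero_of_mul h)
  exact ⟨ne_zero_pow two_ne_zero (right_ne_zero_of_mul hC), left_ne_zero_of_mul hC⟩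

end CrossingParameter

section DeterminantRatio

open Finset

variable {n K : Type*} [Fintype n] [DecidableEq n] [Field K]

/-- The numerator `(∏ M i j) · det (1 / M i j)` of a determinant ratio of Izergin–Korepin or
Tsuchiya type; the inverses are those of the entries, and not the inverse matrix. -/
def detInvNumerator (M : Matrix n n K) : K :=
  (∏ i, ∏ j, M i j) * (Matrix.of fun i j => (M i j)⁻¹).det

theorem detInvNumerator_transpose (M : Matrix n n K) :
    detInvNumerator M.transpose = detInvNumerator M := by
  unfold detInvNumerator
  rw [prod_comm (f := fun i j => M i j), ← Matrix.det_transpose (Matrix.of fun i j => (M i j)⁻¹)]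
  rfl

theorem detInvNumerator_mul_row {u : n → K} (hu : ∀ i, u i ≠ 0) (M : Matrix n n K) :
    detInvNumerator (Matrix.of fun i j => u i * M i j)
      = (∏ i, u i) ^ (Fintype.card n - 1) * detInvNumerator M := by
  rcases isEmpty_or_nonempty n with _ | _
  · simp [detInvNumerator]
  have hdet : (Matrix.of fun i j => (u i * M i j)⁻¹).det
      = (∏ i, u i)⁻¹ * (Matrix.of fun i j => (M i j)⁻¹).det := by
    rw [← prod_inv_distrib, ← Matrix.det_mul_column]
    simp only [mul_inv, Matrix.of_apply]
  have hprod : (∏ i, ∏ j, u i * M i j)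
      = (∏ i, u i) ^ (Fintype.card n - 1) * (∏ i, u i) * ∏ i, ∏ j, M i j := by
    simp only [prod_mul_distrib, prod_const, card_univ, prod_pow,
      pow_sub_one_mul Fintype.card_ne_zero]
  simp only [detInvNumerator, Matrix.of_apply]
  rw [hdet, hprod]
  field_simp [prod_ne_zero_iff.2 fun i _ => hu i]

theorem detInvNumerator_mul_row_mul_column {u v : n → K} (hu : ∀ i, u i ≠ 0) (hv : ∀ j, v j ≠ 0)
    (M : Matrix n n K) :
    detInvNumerator (Matrix.of fun i j => u i * v j * M i j)
      = ((∏ i, u i) * ∏ j, v j) ^ (Fintype.card n - 1) * detInvNumerator M := by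
  have hrow := detInvNumerator_mul_row hu (Matrix.of fun i j => v j * M i j)
  have hcol := detInvNumerator_mul_row hv M.transpose
  rw [← detInvNumerator_transpose] at hcol
  simp only [Matrix.of_apply, ← mul_assoc] at hrow
  rw [hrow, mul_pow, mul_assoc, ← detInvNumerator_transpose M, ← hcol]
  rfl

end DeterminantRatio

section PairProducts

open Finset

theorem prod_prod_Ioi_mul_eq_prod_pow {ι M : Type*} [Fintype ι] [LinearOrder ι]
    [LocallyFiniteOrderTop ι] [LocallyFiniteOrderBot ι] [CommMonoid M] (g : ι → M) :
    ∏ i, ∏ j ∈ Ioi i, g i * g j = (∏ i, g i) ^ (Fintype.card ι - 1) := by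
  rw [prod_prod_Ioi_mul_eq_prod_prod_off_diag fun _ i => g i, ← prod_pow]
  simp only [prod_const, card_compl, card_singleton]

theorem vdm_eq_prod_Ioi {k : ℕ} (y : Fin k → ℂ) : vdm y = ∏ i, ∏ j ∈ Ioi i, (y j - y i) := by
  simp only [vdm, ← prod_filter, filter_lt_eq_Ioi]

theorem vdTheta_eq_prod_Ioi (τ : ℂ) {k : ℕ} (y : Fin k → ℂ) :
    vdTheta τ y = ∏ i, ∏ j ∈ Ioi i, th1 (y j - y i) τ * th1 (y j + y i) τ := by
  simp only [vdTheta, ← prod_filter, filter_lt_eq_Ioi]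

theorem vdm_wfun_mul_vdm_wfun {τ : ℂ} (hτ : 0 < τ.im) {k : ℕ} {a b : Fin k → ℂ}
    (ha : ∀ i, etaProd τ (a i) ≠ 0) (hb : ∀ i, etaProd τ (b i) ≠ 0) :
    vdm (fun i => wfun τ (a i)) * vdm (fun i => wfun τ (b i))
        * (∏ i, etaProd τ (a i) * etaProd τ (b i)) ^ (k - 1)
      = (wScale τ * th1 ηc τ ^ 2) ^ (k * (k - 1)) * (vdTheta τ a * vdTheta τ b) := by
  have hG := prod_prod_Ioi_mul_eq_prod_pow fun i => etaProd τ (a i) * etaProd τ (b i)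
  have hC := prod_prod_Ioi_mul_eq_prod_pow fun _ : Fin k => wScale τ * th1 ηc τ ^ 2
  rw [Fintype.card_fin] at hG
  rw [Fintype.card_fin, prod_const, card_univ, Fintype.card_fin, ← pow_mul] at hC
  rw [← hG, ← hC]
  simp only [vdm_eq_prod_Ioi, vdTheta_eq_prod_Ioi, ← prod_mul_distrib]
  refine prod_congr rfl fun i _ => prod_congr rfl fun j _ => ?_
  linear_combination congrArg₂ (· * ·) (wfun_sub_wfun hτ (ha j) (ha i))
    (wfun_sub_wfun hτ (hb j) (hb i))

theorem prod_firstHalf_mul_prod_secondHalf {k : ℕ} (x : Fin (2 * k) → ℂ) (F : ℂ → ℂ) :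
    (∏ i, F (firstHalf x i)) * ∏ i, F (secondHalf x i) = ∏ i, F (x i) := by
  rw [← (finCongr (two_mul k)).symm.prod_comp, Fin.prod_univ_add]
  rfl

end PairProducts

section TsuchiyaDeterminant

open Finset

theorem tsuchiya_eq_div (τ : ℂ) (k : ℕ) (x : Fin (2 * k) → ℂ) :
    tsuchiya τ k x
      = detInvNumerator (Matrix.of fun i j => hh τ (firstHalf x i) (secondHalf x j))
        / (vdTheta τ (firstHalf x) * vdTheta τ (secondHalf x)) :=
  div_mul_eq_mul_div _ _ _

theorem Hratio_eq_div (ζ : ℂ) (k : ℕ) (w : Fin (2 * k) → ℂ) :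
    Hratio ζ k w
      = detInvNumerator (Matrix.of fun i j => hpol ζ (firstHalf w i) (secondHalf w j))
        / (vdm (firstHalf w) * vdm (secondHalf w)) :=
  div_mul_eq_mul_div _ _ _

theorem detInvNumerator_hh {τ : ℂ} (hτ : 0 < τ.im) (hη : th1 ηc τ ≠ 0) (hA : wScale τ ≠ 0)
    {k : ℕ} {a b : Fin k → ℂ} (ha : ∀ i, etaProd τ (a i) ≠ 0) (hb : ∀ i, etaProd τ (b i) ≠ 0) :
    detInvNumerator (Matrix.of fun i j => hh τ (a i) (b j))
      = (th1 ηc τ ^ 4)⁻¹ ^ (k * (k - 1))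
        * ((∏ i, etaProd τ (a i) * etaProd τ (b i)) ^ (k - 1)) ^ 2
        * detInvNumerator (Matrix.of fun i j => hpol (zet τ) (wfun τ (a i)) (wfun τ (b j))) := by
  have h := detInvNumerator_mul_row_mul_column
    (u := fun i => (th1 ηc τ ^ 4)⁻¹ * etaProd τ (a i) ^ 2) (v := fun j => etaProd τ (b j) ^ 2)
    (fun i => mul_ne_zero (inv_ne_zero (pow_ne_zero 4 hη)) (pow_ne_zero 2 (ha i)))
    (fun j => pow_ne_zero 2 (hb j))
    (Matrix.of fun i j => hpol (zet τ) (wfun τ (a i)) (wfun τ (b j)))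
  simp only [Matrix.of_apply, Fintype.card_fin, prod_mul_distrib, prod_const, card_univ,
    prod_pow] at h ⊢
  simp only [hh_eq_hpol hτ hη hA (ha _) (hb _), ← mul_assoc]
  rw [h, pow_mul]
  ring

theorem tsuchiya_one {τ : ℂ} {x : Fin (2 * 1) → ℂ}
    (hx : hh τ (firstHalf x 0) (secondHalf x 0) ≠ 0) : tsuchiya τ 1 x = 1 := by
  simp [tsuchiya, vdTheta, hx]

theorem Hratio_one {ζ : ℂ} {w : Fin (2 * 1) → ℂ}
    (hw : hpol ζ (firstHalf w 0) (secondHalf w 0) ≠ 0) : Hratio ζ 1 w = 1 := by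
  simp [Hratio, vdm, hw]

theorem tsuchiya_eq_Hratio {τ : ℂ} (hτ : 0 < τ.im) (hη : th1 ηc τ ≠ 0) (hA : wScale τ ≠ 0)
    {k : ℕ} {x : Fin (2 * k) → ℂ} (hx : ∀ i, etaProd τ (x i) ≠ 0) :
    tsuchiya τ k x
      = (wScale τ / th1 ηc τ ^ 2) ^ (k * (k - 1)) * (∏ i, etaProd τ (x i)) ^ (k - 1)
        * Hratio (zet τ) k (fun i => wfun τ (x i)) := by
  have ha (i : Fin k) : etaProd τ (firstHalf x i) ≠ 0 := hx _
  have hb (i : Fin k) : etaProd τ (secondHalf x i) ≠ 0 := hx _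
  have hV := vdm_wfun_mul_vdm_wfun hτ ha hb
  have hG : (∏ i, etaProd τ (x i)) ≠ 0 := prod_ne_zero_iff.2 fun i _ => hx i
  have hC : wScale τ * th1 ηc τ ^ 2 ≠ 0 := mul_ne_zero hA (pow_ne_zero 2 hη)
  have hH : Hratio (zet τ) k (fun i => wfun τ (x i))
      = detInvNumerator (Matrix.of fun i j =>
          hpol (zet τ) (wfun τ (firstHalf x i)) (wfun τ (secondHalf x j)))
        / (vdm (fun i => wfun τ (firstHalf x i)) * vdm (fun i => wfun τ (secondHalf x i))) :=
    Hratio_eq_div _ _ _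
  rw [hH, tsuchiya_eq_div, detInvNumerator_hh hτ hη hA ha hb,
    eq_div_of_mul_eq (pow_ne_zero _ hC) ((mul_comm _ _).trans hV.symm), prod_mul_distrib,
    prod_firstHalf_mul_prod_secondHalf]
  simp only [mul_pow, div_pow, inv_pow]
  field_simp
  ring

end TsuchiyaDeterminant

theorem stmt1 (τ : ℂ) (hτ : 0 < τ.im) (k : ℕ) (hk : 1 ≤ k) (x : Fin (2*k) → ℂ)
    (hx : tsuDefined τ k x)
    (hw : ∀ i : Fin (2*k), th1 (x i - ηc) τ ≠ 0 ∧ th1 (x i + ηc) τ ≠ 0)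
    (hH : HratioDefined (zet τ) k (fun i => wfun τ (x i))) :
    tsuchiya τ k x
      = (th4 ηc (2*τ) / (th1 ηc τ ^ 2 * th4 0 (2*τ))) ^ (k*(k-1))
        * (∏ i : Fin (2*k), (th1 (x i + ηc) τ * th1 (x i - ηc) τ) ^ (k-1))
        * Hratio (zet τ) k (fun i => wfun τ (x i)) := by
  have hg (i) : etaProd τ (x i) ≠ 0 := mul_ne_zero (hw i).2 (hw i).1
  rcases hk.eq_or_lt with rfl | hk2
  · rw [tsuchiya_one (hx.2.2 0 0), Hratio_one (hH.2.2 0 0)]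
    simp
  have hne : (⟨0, hk⟩ : Fin k) ≠ ⟨1, hk2⟩ := by simp
  obtain ⟨hη, hA⟩ :=
    th1_eta_ne_zero_and_wScale_ne_zero_of_wfun_ne hτ (hg _) (hg _) (hH.1 _ _ hne)
  rw [tsuchiya_eq_Hratio hτ hη hA hg, wScale, div_div, mul_comm (th4 0 (2 * τ)), ← Finset.prod_pow]
  rfl

end
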